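/- Let E be an Archimedean Riesz space and let I ⊆ E be an ideal that is finite dimensional as a real vector space. Then I is a projection band of E, and moreover I is a principal band (the band generated by a single element of E). -/

import Mathlib

/-- A (Riesz) ideal of an ordered real vector space: a submodule `I` such that
`|x| ≤ |y|` and `y ∈ I` imply `x ∈ I`. -/
def IsRieszIdeal {E : Type*} [AddCommGroup E] [Lattice E] [Module ℝ E]
    (I : Submodule ℝ E) : Prop :=
  ∀ x y : E, |x| ≤ |y| → y ∈ I → x ∈ I

/-- A band: an ideal closed under suprema of its subsets (when they exist in `E`). -/
def IsBand {E : Type*} [AddCommGroup E] [Lattice E] [Module ℝ E]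
    (B : Submodule ℝ E) : Prop :=
  IsRieszIdeal B ∧ ∀ (D : Set E) (x : E), D ⊆ (B : Set E) → IsLUB D x → x ∈ B

/-- The disjoint complement of a set `D`. -/
def disjComplement {E : Type*} [AddCommGroup E] [Lattice E] (D : Set E) : Set E :=
  {x : E | ∀ y ∈ D, |x| ⊓ |y| = 0}

/-- A projection band: a band `B` with `E = B ⊕ Bᵈ`. -/
def IsProjectionBand {E : Type*} [AddCommGroup E] [Lattice E] [Module ℝ E]
    (B : Submodule ℝ E) : Prop :=
  IsBand B ∧ ∀ x : E, ∃ y ∈ B, ∃ z ∈ disjComplement (B : Set E), x = y + z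

/-- An order direct sum decomposition `E = L ⊕ M`: every element decomposes uniquely
as a sum of an element of `L` and an element of `M`, and an element is positive iff
both its components are positive. -/
def IsOrderDecomposition {E : Type*} [AddCommGroup E] [Lattice E] [Module ℝ E]
    (L M : Submodule ℝ E) : Prop :=
  (∀ x : E, ∃ y ∈ L, ∃ z ∈ M, x = y + z) ∧
  (∀ x : E, x ∈ L → x ∈ M → x = 0) ∧
  (∀ y z : E, y ∈ L → z ∈ M → (0 ≤ y + z ↔ 0 ≤ y ∧ 0 ≤ z))

/-- A homomorphism `ρ : G →* (E ≃ₗ[ℝ] E)` is a positive representation when each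
`ρ s` is an order isomorphism (hence a lattice automorphism). -/
def IsPositiveRep {E : Type*} [AddCommGroup E] [Lattice E] [Module ℝ E]
    {G : Type*} [Group G] (ρ : G →* (E ≃ₗ[ℝ] E)) : Prop :=
  ∀ (s : G) (x y : E), x ≤ y ↔ ρ s x ≤ ρ s y

/-- A submodule is `ρ`-invariant if it is mapped into itself by every `ρ s`. -/
def InvariantSubmodule {E : Type*} [AddCommGroup E] [Lattice E] [Module ℝ E]
    {G : Type*} [Group G] (ρ : G →* (E ≃ₗ[ℝ] E)) (B : Submodule ℝ E) : Prop :=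
  ∀ (s : G), ∀ x ∈ B, ρ s x ∈ B

/-- `ρ` is order indecomposable if the only `ρ`-invariant order direct sum
decompositions `E = L ⊕ M` are the trivial ones. -/
def OrderIndecomposable {E : Type*} [AddCommGroup E] [Lattice E] [Module ℝ E]
    {G : Type*} [Group G] (ρ : G →* (E ≃ₗ[ℝ] E)) : Prop :=
  ∀ L M : Submodule ℝ E, IsOrderDecomposition L M →
    InvariantSubmodule ρ L → InvariantSubmodule ρ M → L = ⊥ ∨ L = ⊤

/-- `ρ` is projection band irreducible if the only `ρ`-invariant projection bands
are `{0}` and `E`. -/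
def ProjectionBandIrreducible {E : Type*} [AddCommGroup E] [Lattice E] [Module ℝ E]
    {G : Type*} [Group G] (ρ : G →* (E ≃ₗ[ℝ] E)) : Prop :=
  ∀ B : Submodule ℝ E, IsProjectionBand B → InvariantSubmodule ρ B → B = ⊥ ∨ B = ⊤


/-- A principal band: the band generated by a single element, i.e. the smallest band
containing some element `x`. -/
def IsPrincipalBand {E : Type*} [AddCommGroup E] [Lattice E] [Module ℝ E]
    (B : Submodule ℝ E) : Prop :=
  IsBand B ∧ ∃ x ∈ B, ∀ C : Submodule ℝ E, IsBand C → x ∈ C → B ≤ C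

/-- `E` is Archimedean: if `0 ≤ n • x ≤ y` for all positive integers `n`, then `x = 0`. -/
def RieszArchimedean (E : Type*) [AddCommGroup E] [Lattice E] [Module ℝ E] : Prop :=
  ∀ x y : E, (∀ n : ℕ, 0 < n → 0 ≤ n • x ∧ n • x ≤ y) → x = 0

section RieszAux

variable {E : Type*} [AddCommGroup E] [Lattice E] [Module ℝ E] [IsOrderedAddMonoid E]

lemma raux_abs_zero {x : E} (h : |x| = 0) : x = 0 :=
  le_antisymm (h ▸ le_abs_self x) (neg_nonpos.1 (h ▸ neg_le_abs x))

lemma raux_inf_add_le {a b c : E} (ha : 0 ≤ a) (hb : 0 ≤ b) (hc : 0 ≤ c) :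
    (a + b) ⊓ c ≤ a ⊓ c + b ⊓ c := by
  rw [inf_add, add_inf, add_inf]
  refine le_inf (le_inf inf_le_left ?_) (le_inf ?_ ?_)
  · exact inf_le_right.trans (le_add_of_nonneg_left ha)
  · exact inf_le_right.trans (le_add_of_nonneg_right hb)
  · exact inf_le_right.trans (le_add_of_nonneg_right hc)

lemma raux_disj_add {x y w : E} (hx : |x| ⊓ |w| = 0) (hy : |y| ⊓ |w| = 0) :
    |x + y| ⊓ |w| = 0 := by
  apply le_antisymm _ (le_inf (abs_nonneg _) (abs_nonneg _))
  calc |x + y| ⊓ |w| ≤ (|x| + |y|) ⊓ |w| := inf_le_inf_right _ (abs_add_le x y)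
    _ ≤ |x| ⊓ |w| + |y| ⊓ |w| := raux_inf_add_le (abs_nonneg _) (abs_nonneg _) (abs_nonneg _)
    _ = 0 := by rw [hx, hy, add_zero]

lemma raux_disj_le {x y w : E} (h : |x| ≤ |y|) (hy : |y| ⊓ |w| = 0) : |x| ⊓ |w| = 0 :=
  le_antisymm ((inf_le_inf_right _ h).trans hy.le) (le_inf (abs_nonneg _) (abs_nonneg _))

lemma raux_smul_mono (hsmul : ∀ (c : ℝ) (x : E), 0 ≤ c → 0 ≤ x → 0 ≤ c • x)
    {c : ℝ} {x y : E} (hc : 0 ≤ c) (h : x ≤ y) : c • x ≤ c • y := by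
  have := hsmul c (y - x) hc (sub_nonneg.2 h)
  rw [smul_sub] at this
  exact sub_nonneg.1 this

lemma raux_smul_mono_left (hsmul : ∀ (c : ℝ) (x : E), 0 ≤ c → 0 ≤ x → 0 ≤ c • x)
    {c d : ℝ} {x : E} (hx : 0 ≤ x) (h : c ≤ d) : c • x ≤ d • x := by
  have := hsmul (d - c) x (sub_nonneg.2 h) hx
  rw [sub_smul] at this
  exact sub_nonneg.1 this

lemma raux_abs_smul_le (hsmul : ∀ (c : ℝ) (x : E), 0 ≤ c → 0 ≤ x → 0 ≤ c • x)
    (c : ℝ) (x : E) : |c • x| ≤ |c| • |x| := by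
  have key : ∀ c : ℝ, c • x ≤ |c| • |x| := by
    intro c
    rcases le_total 0 c with h | h
    · rw [abs_of_nonneg h]; exact raux_smul_mono hsmul h (le_abs_self x)
    · rw [abs_of_nonpos h]
      have := raux_smul_mono hsmul (neg_nonneg.2 h) (neg_le_abs x)
      simpa using this
  refine abs_le'.2 ⟨key c, ?_⟩
  simpa using key (-c)

lemma raux_disj_smul (hsmul : ∀ (c : ℝ) (x : E), 0 ≤ c → 0 ≤ x → 0 ≤ c • x)
    (c : ℝ) {x w : E} (hx : |x| ⊓ |w| = 0) : |c • x| ⊓ |w| = 0 := by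
  obtain ⟨n, hn⟩ := exists_nat_ge |c|
  have h1 : ∀ n : ℕ, |n • x| ⊓ |w| = 0 ∧ |n • (|x|)| ⊓ |w| = 0 := by
    intro n
    induction n with
    | zero => simp
    | succ k ih =>
      rw [succ_nsmul, succ_nsmul]
      exact ⟨raux_disj_add ih.1 hx, raux_disj_add ih.2 (by rwa [abs_abs])⟩
  refine raux_disj_le ?_ (h1 n).2
  rw [abs_of_nonneg (nsmul_nonneg (abs_nonneg x) n)]
  refine (raux_abs_smul_le hsmul c x).trans ?_
  rw [← Nat.cast_smul_eq_nsmul ℝ]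
  exact raux_smul_mono_left hsmul (abs_nonneg x) hn

/-- The disjoint complement of one element as a submodule. -/
def rauxD (hsmul : ∀ (c : ℝ) (x : E), 0 ≤ c → 0 ≤ x → 0 ≤ c • x) (w : E) :
    Submodule ℝ E where
  carrier := {x | |x| ⊓ |w| = 0}
  add_mem' := fun ha hb => raux_disj_add ha hb
  zero_mem' := by simp
  smul_mem' := fun c _ hx => raux_disj_smul hsmul c hx

lemma raux_mem_D (hsmul : ∀ (c : ℝ) (x : E), 0 ≤ c → 0 ≤ x → 0 ≤ c • x) (w x : E) :
    x ∈ rauxD hsmul w ↔ |x| ⊓ |w| = 0 := Iff.rfl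

lemma raux_D_self (hsmul : ∀ (c : ℝ) (x : E), 0 ≤ c → 0 ≤ x → 0 ≤ c • x) {w : E}
    (h : w ∈ rauxD hsmul w) : w = 0 := by
  rw [raux_mem_D, inf_idem] at h
  exact raux_abs_zero h

lemma raux_ideal_inf (hsmul : ∀ (c : ℝ) (x : E), 0 ≤ c → 0 ≤ x → 0 ≤ c • x) (w : E)
    {I : Submodule ℝ E} (hI : IsRieszIdeal I) : IsRieszIdeal (I ⊓ rauxD hsmul w) :=
  fun x y h hy => ⟨hI x y h hy.1, raux_disj_le h hy.2⟩

lemma raux_arch (hsmul : ∀ (c : ℝ) (x : E), 0 ≤ c → 0 ≤ x → 0 ≤ c • x)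
    (harch : RieszArchimedean E) {z a : E} (hz : 0 ≤ z)
    (h : ∀ ε : ℝ, 0 < ε → z ≤ ε • a) : z = 0 := by
  refine harch z a fun n hn => ⟨nsmul_nonneg hz n, ?_⟩
  have hn' : (0 : ℝ) < n := by exact_mod_cast hn
  have := raux_smul_mono hsmul hn'.le (h (n : ℝ)⁻¹ (by positivity))
  rwa [smul_smul, mul_inv_cancel₀ hn'.ne', one_smul, Nat.cast_smul_eq_nsmul ℝ] at this

lemma raux_maxmul (hsmul : ∀ (c : ℝ) (x : E), 0 ≤ c → 0 ≤ x → 0 ≤ c • x)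
    (harch : RieszArchimedean E) {a x : E} (ha : 0 ≤ a) (ha0 : a ≠ 0) (hx : 0 ≤ x) :
    ∃ c : ℝ, c • a ≤ x ∧ ∀ t : ℝ, t • a ≤ x → t ≤ c := by
  let S : Set ℝ := {t | t • a ≤ x}
  have hne : S.Nonempty := ⟨0, by simpa [S] using hx⟩
  have hbdd : BddAbove S := by
    by_contra hb
    apply ha0
    refine harch a x fun n _ => ⟨nsmul_nonneg ha n, ?_⟩
    rw [not_bddAbove_iff] at hb
    obtain ⟨t, ht, hnt⟩ := hb n
    rw [← Nat.cast_smul_eq_nsmul ℝ]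
    exact (raux_smul_mono_left hsmul ha hnt.le).trans ht
  refine ⟨sSup S, ?_, fun t ht => le_csSup hbdd ht⟩
  have : (sSup S • a - x) ⊔ 0 = 0 := by
    refine raux_arch hsmul harch (a := a) le_sup_right fun ε hε => ?_
    refine sup_le ?_ (hsmul ε a hε.le ha)
    obtain ⟨t, ht, hlt⟩ := exists_lt_of_lt_csSup hne (sub_lt_self (sSup S) hε)
    have h1 : (sSup S - ε) • a ≤ x := (raux_smul_mono_left hsmul ha hlt.le).trans ht
    rw [sub_smul] at h1
    exact sub_le_comm.1 h1
  exact sub_nonpos.1 (sup_eq_right.1 this)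

lemma raux_min (hsmul : ∀ (c : ℝ) (x : E), 0 ≤ c → 0 ≤ x → 0 ≤ c • x)
    (harch : RieszArchimedean E) {I : Submodule ℝ E} (hI : IsRieszIdeal I)
    (hmin : ∀ J : Submodule ℝ E, IsRieszIdeal J → J < I → J = ⊥)
    {a y : E} (ha : 0 ≤ a) (ha0 : a ≠ 0) (haI : a ∈ I) (hy : 0 ≤ y) (hyI : y ∈ I) :
    ∃ c : ℝ, y = c • a := by
  obtain ⟨c, hc, hmax⟩ := raux_maxmul hsmul harch ha ha0 hy
  refine ⟨c, sub_eq_zero.1 ?_⟩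
  refine raux_arch hsmul harch (a := a) (sub_nonneg.2 hc) fun ε hε => ?_
  set u : E := y - c • a - ε • a with hu
  have huI : u ∈ I := I.sub_mem (I.sub_mem hyI (I.smul_mem _ haI)) (I.smul_mem _ haI)
  have hp : u⁺ ∈ I := hI _ u (by
    rw [abs_of_nonneg (posPart_nonneg u)]
    exact sup_le (le_abs_self u) (abs_nonneg u)) huI
  have hn : u⁻ ∈ I := hI _ u (by
    rw [abs_of_nonneg (negPart_nonneg u)]
    exact sup_le (neg_le_abs u) (abs_nonneg u)) huI
  have hn0 : u⁻ ≠ 0 := by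
    intro h
    rw [negPart_eq_zero, hu, sub_sub, ← add_smul, sub_nonneg] at h
    have := hmax _ h
    linarith
  have hJ := hmin _ (raux_ideal_inf hsmul u⁻ hI) (lt_of_le_of_ne inf_le_left (by
    intro h
    rw [← h] at hn
    exact hn0 (raux_D_self hsmul hn.2)))
  have hpJ : u⁺ ∈ I ⊓ rauxD hsmul u⁻ := ⟨hp, by
    change |u⁺| ⊓ |u⁻| = 0
    rw [abs_of_nonneg (posPart_nonneg u), abs_of_nonneg (negPart_nonneg u)]
    exact posPart_inf_negPart_eq_zero u⟩
  rw [hJ, Submodule.mem_bot, posPart_eq_zero] at hpJ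
  exact sub_nonpos.1 hpJ

lemma raux_atom (hsmul : ∀ (c : ℝ) (x : E), 0 ≤ c → 0 ≤ x → 0 ≤ c • x)
    (harch : RieszArchimedean E) (n : ℕ) : ∀ (I : Submodule ℝ E), IsRieszIdeal I →
    FiniteDimensional ℝ I → Module.finrank ℝ I = n → I ≠ ⊥ →
    ∃ a ∈ I, 0 ≤ a ∧ a ≠ 0 ∧ ∀ y, 0 ≤ y → y ≤ a → ∃ t : ℝ, y = t • a := by
  induction n using Nat.strong_induction_on with
  | _ n ih =>
  intro I hI hfin hn hbot
  by_cases hmin : ∀ J : Submodule ℝ E, IsRieszIdeal J → J < I → J = ⊥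
  · obtain ⟨x, hx, hx0⟩ := Submodule.exists_mem_ne_zero_of_ne_bot hbot
    have haI : |x| ∈ I := hI _ x (by rw [abs_abs]) hx
    refine ⟨|x|, haI, abs_nonneg x, fun h => hx0 (raux_abs_zero h), ?_⟩
    intro y hy hyx
    refine raux_min hsmul harch hI hmin (abs_nonneg x)
      (fun h => hx0 (raux_abs_zero h)) haI hy (hI y x ?_ hx)
    rwa [abs_of_nonneg hy]
  · push Not at hmin
    obtain ⟨J, hJ, hlt, hJ0⟩ := hmin
    obtain ⟨a, haJ, h⟩ := ih _ (hn ▸ Submodule.finrank_lt_finrank_of_lt hlt) J hJ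
      (Submodule.finiteDimensional_of_le hlt.le) rfl hJ0
    exact ⟨a, hlt.le haJ, h⟩

lemma raux_proj_atom (hsmul : ∀ (c : ℝ) (x : E), 0 ≤ c → 0 ≤ x → 0 ≤ c • x)
    (harch : RieszArchimedean E) {a : E} (ha : 0 ≤ a) (ha0 : a ≠ 0)
    (hat : ∀ y, 0 ≤ y → y ≤ a → ∃ t : ℝ, y = t • a) (x : E) :
    ∃ c : ℝ, x - c • a ∈ rauxD hsmul a := by
  have key : ∀ x : E, 0 ≤ x → ∃ c : ℝ, x - c • a ∈ rauxD hsmul a := by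
    intro x hx
    obtain ⟨c, hc, hmax⟩ := raux_maxmul hsmul harch ha ha0 hx
    refine ⟨c, ?_⟩
    have h0 := sub_nonneg.2 hc
    rw [raux_mem_D, abs_of_nonneg h0, abs_of_nonneg ha]
    obtain ⟨s, hs⟩ := hat _ (le_inf h0 ha) inf_le_right
    have h1 : s • a ≤ x - c • a := hs ▸ inf_le_left
    have h2 : (s + c) • a ≤ x := by rw [add_smul]; exact le_sub_iff_add_le.1 h1
    have h3 := hmax _ h2
    have h4 : s • a ≤ 0 := by
      simpa using raux_smul_mono_left hsmul ha (show s ≤ 0 by linarith)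
    exact le_antisymm (hs ▸ h4) (le_inf h0 ha)
  obtain ⟨c, hc⟩ := key _ (posPart_nonneg x)
  obtain ⟨d, hd⟩ := key _ (negPart_nonneg x)
  refine ⟨c - d, ?_⟩
  have := (rauxD hsmul a).sub_mem hc hd
  have e : x⁺ - c • a - (x⁻ - d • a) = x - (c - d) • a := by
    conv_rhs => rw [← posPart_sub_negPart x]
    rw [sub_smul]; abel
  rwa [e] at this

lemma raux_main (hsmul : ∀ (c : ℝ) (x : E), 0 ≤ c → 0 ≤ x → 0 ≤ c • x)
    (harch : RieszArchimedean E) (n : ℕ) : ∀ (I : Submodule ℝ E), IsRieszIdeal I →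
    FiniteDimensional ℝ I → Module.finrank ℝ I = n →
    (∀ x : E, ∃ y ∈ I, ∃ z ∈ disjComplement (I : Set E), x = y + z) ∧
    ∃ e ∈ I, 0 ≤ e ∧ ∀ C : Submodule ℝ E, IsRieszIdeal C → e ∈ C → I ≤ C := by
  induction n using Nat.strong_induction_on with
  | _ n ih =>
  intro I hI hfin hn
  by_cases hbot : I = ⊥
  · subst hbot
    refine ⟨fun x => ⟨0, Submodule.zero_mem _, x, ?_, by simp⟩, 0, Submodule.zero_mem _, le_rfl,
      fun C _ _ => bot_le⟩
    intro y hy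
    have : y = 0 := by simpa using hy
    simp [this]
  obtain ⟨a, haI, ha, ha0, hat⟩ := raux_atom hsmul harch n I hI hfin hn hbot
  have hlt : I ⊓ rauxD hsmul a < I := lt_of_le_of_ne inf_le_left (by
    intro h
    have h' := haI
    rw [← h] at h'
    exact ha0 (raux_D_self hsmul h'.2))
  obtain ⟨h1, e, he, he0, h2⟩ := ih _ (hn ▸ Submodule.finrank_lt_finrank_of_lt hlt) _
    (raux_ideal_inf hsmul a hI) (Submodule.finiteDimensional_of_le hlt.le) rfl
  have hdec : ∀ w ∈ I, ∃ c : ℝ, w - c • a ∈ I ⊓ rauxD hsmul a := by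
    intro w hw
    obtain ⟨c, hc⟩ := raux_proj_atom hsmul harch ha ha0 hat w
    exact ⟨c, I.sub_mem hw (I.smul_mem _ haI), hc⟩
  constructor
  · intro x
    obtain ⟨c, hc⟩ := raux_proj_atom hsmul harch ha ha0 hat x
    obtain ⟨y, hy, z, hz, hxyz⟩ := h1 (x - c • a)
    refine ⟨c • a + y, I.add_mem (I.smul_mem _ haI) hy.1, z, ?_, ?_⟩
    · have hza : |a| ⊓ |z| = 0 := by
        have : z ∈ rauxD hsmul a := by
          have := (rauxD hsmul a).sub_mem hc hy.2
          rwa [hxyz, add_sub_cancel_left] at this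
        rw [inf_comm]; exact this
      intro w hw
      obtain ⟨d, hd⟩ := hdec w hw
      have hzd : |w - d • a| ⊓ |z| = 0 := by rw [inf_comm]; exact hz _ hd
      have := raux_disj_add hzd (raux_disj_smul hsmul d hza)
      rw [sub_add_cancel] at this
      rwa [inf_comm]
    · rw [add_assoc, ← hxyz]; abel
  · refine ⟨a + e, I.add_mem haI he.1, add_nonneg ha he0, ?_⟩
    intro C hC hae w hw
    have hae0 := add_nonneg ha he0
    have haC : a ∈ C := hC a _ (by
      rw [abs_of_nonneg ha, abs_of_nonneg hae0]; exact le_add_of_nonneg_right he0) hae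
    have heC : e ∈ C := hC e _ (by
      rw [abs_of_nonneg he0, abs_of_nonneg hae0]; exact le_add_of_nonneg_left ha) hae
    obtain ⟨d, hd⟩ := hdec w hw
    have := C.add_mem (h2 C hC heC hd) (C.smul_mem d haC)
    rwa [sub_add_cancel] at this

lemma raux_band {I : Submodule ℝ E} (hI : IsRieszIdeal I)
    (h : ∀ x : E, ∃ y ∈ I, ∃ z ∈ disjComplement (I : Set E), x = y + z) : IsBand I := by
  refine ⟨hI, fun D x hD hx => ?_⟩
  rcases D.eq_empty_or_nonempty with rfl | ⟨d, hd⟩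
  · have hb : ∀ y, x ≤ y := fun y => hx.2 (by simp)
    have h1 : 0 ≤ x := by simpa using hb (x + x)
    rw [le_antisymm (hb 0) h1]
    exact I.zero_mem
  obtain ⟨y, hy, z, hz, rfl⟩ := h x
  have hub : ∀ d ∈ D, d ≤ y := by
    intro d hd
    have h1 : d - y ≤ z := sub_le_iff_le_add'.2 (hx.1 hd)
    have h2 : (d - y)⁺ ∈ I := hI _ (d - y) (by
      rw [abs_of_nonneg (posPart_nonneg _)]
      exact sup_le (le_abs_self _) (abs_nonneg _)) (I.sub_mem (hD hd) hy)
    have h3 := hz _ h2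
    rw [abs_of_nonneg (posPart_nonneg _), inf_eq_right.2] at h3
    · exact sub_nonpos.1 (posPart_eq_zero.1 h3)
    · exact sup_le (h1.trans (le_abs_self z)) (abs_nonneg z)
  have hz0 : z ≤ 0 := by simpa using hx.2 hub
  refine I.add_mem hy (hI z (d - y) ?_ (I.sub_mem (hD hd) hy))
  have h1 : d - y ≤ z := sub_le_iff_le_add'.2 (hx.1 hd)
  rw [abs_of_nonpos hz0, abs_of_nonpos (h1.trans hz0)]
  exact neg_le_neg h1

end RieszAux

/-- In an Archimedean Riesz space, every finite dimensional ideal is a projection band,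
and moreover a principal band. -/
theorem stmt5 {E : Type*} [AddCommGroup E] [Lattice E] [Module ℝ E]
    (hadd : ∀ x y z : E, x ≤ y → x + z ≤ y + z)
    (hsmul : ∀ (c : ℝ) (x : E), 0 ≤ c → 0 ≤ x → 0 ≤ c • x)
    (harch : RieszArchimedean E)
    (I : Submodule ℝ E) (hI : IsRieszIdeal I) (hfin : FiniteDimensional ℝ I) :
    IsProjectionBand I ∧ IsPrincipalBand I := by
  haveI : IsOrderedAddMonoid E := ⟨fun x y h z => by simpa using hadd x y z h,
    fun x y h z => by simpa [add_comm] using hadd x y z h⟩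
  obtain ⟨h1, e, he, -, h2⟩ := raux_main hsmul harch _ I hI hfin rfl
  have hb := raux_band hI h1
  exact ⟨⟨hb, h1⟩, hb, e, he, fun C hC heC => h2 C hC.1 heC⟩
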